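/- Let μ be a finite nonnegative Borel measure on S² supported in the quarter-sphere S₊₊ with μ(S²) = 1, let φ := ∫_{S²} Ω dμ be its first moment and M := ∫_{S²} Ω Ωᵀ dμ its second moment. Assume φ ≠ 0 and that φ/‖φ‖₂ is an eigenvector of M with eigenvalue λ. Then ‖φ‖₂² ≤ λ ≤ ‖φ‖₂. -/

import Mathlib

open MeasureTheory Real

noncomputable section

/-!
Let `m` be the mean of a random vector `X`, and let `Y = ⟪X, m⟫`. Then `∫ Y = ‖m‖²`, while pairing
the eigenvalue equation with `m` gives `∫ Y² = l ‖m‖²`. Jensen's inequality `(∫ Y)² ≤ ∫ Y²` is the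
lower bound on `l`. If `‖X‖ ≤ 1` and `Y ≥ 0`, then `0 ≤ Y ≤ ‖m‖`, so `∫ Y² ≤ ‖m‖ ∫ Y`, which is the
upper bound. For a measure on the quarter-sphere, `Y ≥ 0` because `X` and `m` have nonnegative
coordinates.
-/

variable {α : Type*} [MeasurableSpace α] {μ : Measure α}

section RealValued

variable {Y : α → ℝ}

lemma sq_integral_le_integral_sq [IsProbabilityMeasure μ] (hY : MemLp Y 2 μ) :
    (∫ ω, Y ω ∂μ) ^ 2 ≤ ∫ ω, Y ω ^ 2 ∂μ := by
  have h_variance := ProbabilityTheory.variance_nonneg Y μ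
  rw [ProbabilityTheory.variance_eq_sub hY] at h_variance
  exact sub_nonneg.mp h_variance

lemma integral_sq_le_mul_integral (hY : Integrable Y μ) {c : ℝ}
    (hY_nonneg : ∀ᵐ ω ∂μ, 0 ≤ Y ω) (hY_le : ∀ᵐ ω ∂μ, Y ω ≤ c) :
    ∫ ω, Y ω ^ 2 ∂μ ≤ c * ∫ ω, Y ω ∂μ := by
  rw [← integral_const_mul]
  refine integral_mono_of_nonneg (.of_forall fun ω ↦ sq_nonneg (Y ω)) (hY.const_mul c) ?_
  filter_upwards [hY_nonneg, hY_le] with ω h_nonneg h_le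
  rw [sq]
  exact mul_le_mul_of_nonneg_right h_le h_nonneg

end RealValued

section InnerProductSpace

variable {E : Type*} [NormedAddCommGroup E] [InnerProductSpace ℝ E] {X : α → E}

/-- The second moment `∫ X Xᵀ ∂μ` of a random vector `X`, as the map `v ↦ ∫ ⟪X, v⟫ X ∂μ`. It is a
plain function because it is linear only when all these integrands are integrable, for instance
when `X` is square integrable. -/
def secondMoment (X : α → E) (μ : Measure α) (v : E) : E :=
  ∫ ω, inner ℝ (X ω) v • X ω ∂μ

lemma integrable_inner_smul (hX : MemLp X 2 μ) (v : E) :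
    Integrable (fun ω ↦ inner ℝ (X ω) v • X ω) μ :=
  memLp_one_iff_integrable.mp (hX.smul (hX.inner_const v))

variable [CompleteSpace E]

lemma inner_secondMoment_self (hX : MemLp X 2 μ) (v : E) :
    inner ℝ v (secondMoment X μ v) = ∫ ω, inner ℝ (X ω) v ^ 2 ∂μ := by
  rw [secondMoment, ← integral_inner (integrable_inner_smul hX v)]
  simp only [real_inner_smul_right, real_inner_comm, sq]

lemma integral_inner_integral (hX : Integrable X μ) :
    ∫ ω, inner ℝ (X ω) (∫ ω, X ω ∂μ) ∂μ = ‖∫ ω, X ω ∂μ‖ ^ 2 := by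
  simp only [real_inner_comm (∫ ω, X ω ∂μ)]
  rw [integral_inner hX, real_inner_self_eq_norm_sq]

lemma integral_inner_integral_sq_of_secondMoment_eq_smul (hX : MemLp X 2 μ) {l : ℝ}
    (h_eigen : secondMoment X μ (∫ ω, X ω ∂μ) = l • ∫ ω, X ω ∂μ) :
    ∫ ω, inner ℝ (X ω) (∫ ω, X ω ∂μ) ^ 2 ∂μ = l * ‖∫ ω, X ω ∂μ‖ ^ 2 := by
  rw [← inner_secondMoment_self hX, h_eigen, real_inner_smul_right, real_inner_self_eq_norm_sq]

lemma sq_norm_integral_le_of_secondMoment_eq_smul [IsProbabilityMeasure μ] (hX : MemLp X 2 μ)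
    (h_mean : ∫ ω, X ω ∂μ ≠ 0) {l : ℝ}
    (h_eigen : secondMoment X μ (∫ ω, X ω ∂μ) = l • ∫ ω, X ω ∂μ) :
    ‖∫ ω, X ω ∂μ‖ ^ 2 ≤ l := by
  have h_jensen := sq_integral_le_integral_sq (hX.inner_const (𝕜 := ℝ) (∫ ω, X ω ∂μ))
  rw [integral_inner_integral (hX.integrable one_le_two),
    integral_inner_integral_sq_of_secondMoment_eq_smul hX h_eigen, sq] at h_jensen
  exact le_of_mul_le_mul_right h_jensen (by positivity)

lemma le_mul_norm_integral_of_secondMoment_eq_smul [IsFiniteMeasure μ]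
    (hX : AEStronglyMeasurable X μ) {R : ℝ} (hX_norm : ∀ᵐ ω ∂μ, ‖X ω‖ ≤ R)
    (hX_inner : ∀ᵐ ω ∂μ, 0 ≤ inner ℝ (X ω) (∫ ω, X ω ∂μ)) (h_mean : ∫ ω, X ω ∂μ ≠ 0) {l : ℝ}
    (h_eigen : secondMoment X μ (∫ ω, X ω ∂μ) = l • ∫ ω, X ω ∂μ) :
    l ≤ R * ‖∫ ω, X ω ∂μ‖ := by
  have hX_memLp : MemLp X 2 μ := .of_bound hX R hX_norm
  have hX_integrable : Integrable X μ := hX_memLp.integrable one_le_two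
  have h_inner_le : ∀ᵐ ω ∂μ, inner ℝ (X ω) (∫ ω, X ω ∂μ) ≤ R * ‖∫ ω, X ω ∂μ‖ := by
    filter_upwards [hX_norm] with ω h_norm
    exact (real_inner_le_norm _ _).trans (by gcongr)
  have h_sq_le := integral_sq_le_mul_integral (hX_integrable.inner_const _) hX_inner h_inner_le
  rw [integral_inner_integral hX_integrable,
    integral_inner_integral_sq_of_secondMoment_eq_smul hX_memLp h_eigen] at h_sq_le
  exact le_of_mul_le_mul_right h_sq_le (by positivity)

theorem quarter_moment_eigenvalue_bounds_general [IsProbabilityMeasure μ]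
    (hX : AEStronglyMeasurable X μ) (hX_norm : ∀ᵐ ω ∂μ, ‖X ω‖ ≤ 1)
    (hX_inner : ∀ᵐ ω ∂μ, 0 ≤ inner ℝ (X ω) (∫ ω, X ω ∂μ)) (h_mean : ∫ ω, X ω ∂μ ≠ 0) {l : ℝ}
    (h_eigen : secondMoment X μ (∫ ω, X ω ∂μ) = l • ∫ ω, X ω ∂μ) :
    ‖∫ ω, X ω ∂μ‖ ^ 2 ≤ l ∧ l ≤ ‖∫ ω, X ω ∂μ‖ :=
  ⟨sq_norm_integral_le_of_secondMoment_eq_smul (.of_bound hX 1 hX_norm) h_mean h_eigen,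
    one_mul ‖∫ ω, X ω ∂μ‖ ▸
      le_mul_norm_integral_of_secondMoment_eq_smul hX hX_norm hX_inner h_mean h_eigen⟩

end InnerProductSpace

section EuclideanSpace

variable {ι : Type*} [Fintype ι] {X : α → EuclideanSpace ℝ ι}

lemma secondMoment_eq_toLp_mulVec (hX : MemLp X 2 μ) (v : EuclideanSpace ℝ ι) :
    secondMoment X μ v =
      WithLp.toLp 2 ((Matrix.of fun i j ↦ ∫ ω, X ω i * X ω j ∂μ).mulVec v) := by
  have h_integrable (i j : ι) : Integrable (fun ω ↦ X ω i * X ω j) μ :=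
    (memLp_piLp_iff.mp hX i).integrable_mul (memLp_piLp_iff.mp hX j)
  ext i
  calc secondMoment X μ v i
      = ∫ ω, (inner ℝ (X ω) v • X ω) i ∂μ :=
        eval_integral_piLp (integrable_piLp_iff.mp (integrable_inner_smul hX v)) i
    _ = ∫ ω, ∑ j, X ω i * X ω j * v j ∂μ := by
        simp only [PiLp.smul_apply, smul_eq_mul, PiLp.inner_apply, RCLike.inner_apply,
          conj_trivial, Finset.sum_mul]
        congr! 3
        ring
    _ = ∑ j, (∫ ω, X ω i * X ω j ∂μ) * v j := by
        rw [integral_finsetSum _ fun j _ ↦ (h_integrable i j).mul_const _]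
        simp only [integral_mul_const]

lemma inner_integral_nonneg_of_nonneg (hX : Integrable X μ) (hX_nonneg : ∀ᵐ ω ∂μ, ∀ i, 0 ≤ X ω i) :
    ∀ᵐ ω ∂μ, 0 ≤ inner ℝ (X ω) (∫ ω, X ω ∂μ) := by
  have h_mean_nonneg (i : ι) : 0 ≤ (∫ ω, X ω ∂μ) i := by
    rw [eval_integral_piLp (integrable_piLp_iff.mp hX)]
    exact integral_nonneg_of_ae (hX_nonneg.mono fun ω h ↦ h i)
  filter_upwards [hX_nonneg] with ω h_nonneg
  simp only [PiLp.inner_apply, RCLike.inner_apply, conj_trivial]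
  exact Finset.sum_nonneg fun i _ ↦ mul_nonneg (h_mean_nonneg i) (h_nonneg i)

end EuclideanSpace

section PlaneProjection

/-- The projection `Ω` of `ℝ³` onto its first two coordinates. -/
def planeProjection (ω : EuclideanSpace ℝ (Fin 3)) : EuclideanSpace ℝ (Fin 2) :=
  !₂[ω 0, ω 1]

lemma continuous_planeProjection : Continuous planeProjection := by
  unfold planeProjection
  fun_prop

lemma norm_planeProjection_le (ω : EuclideanSpace ℝ (Fin 3)) : ‖planeProjection ω‖ ≤ ‖ω‖ := by
  simp only [planeProjection, EuclideanSpace.norm_eq, Fin.sum_univ_two, Fin.sum_univ_three]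
  exact Real.sqrt_le_sqrt (le_add_of_nonneg_right (sq_nonneg _))

variable {μ : Measure (EuclideanSpace ℝ (Fin 3))}

lemma integral_planeProjection (h : Integrable planeProjection μ) :
    ∫ ω, planeProjection ω ∂μ = !₂[∫ ω, ω 0 ∂μ, ∫ ω, ω 1 ∂μ] := by
  ext i
  rw [eval_integral_piLp (integrable_piLp_iff.mp h)]
  fin_cases i <;> rfl

lemma secondMoment_planeProjection (h : MemLp planeProjection 2 μ) (v : Fin 2 → ℝ) :
    secondMoment planeProjection μ (WithLp.toLp 2 v) =
      WithLp.toLp 2 ((!![∫ ω, ω 0 * ω 0 ∂μ, ∫ ω, ω 0 * ω 1 ∂μ;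
        ∫ ω, ω 1 * ω 0 ∂μ, ∫ ω, ω 1 * ω 1 ∂μ]).mulVec v) := by
  rw [secondMoment_eq_toLp_mulVec h]
  congr 2
  exact Matrix.eta_fin_two _

end PlaneProjection

/-- Eigenvalue bounds for the quarter-moment second moment: if the first moment `φ` of a
probability measure supported in `S₊₊` is nonzero and is an eigenvector of the second moment
matrix with eigenvalue `l`, then `‖φ‖₂² ≤ l ≤ ‖φ‖₂`. -/
theorem quarter_moment_eigenvalue_bounds
    (μ : Measure (EuclideanSpace ℝ (Fin 3))) [IsFiniteMeasure μ]
    (hsupp : μ {ω | ¬ (‖ω‖ = 1 ∧ 0 ≤ ω 0 ∧ 0 ≤ ω 1)} = 0)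
    (hmass : μ Set.univ = 1)
    (hφ : ![∫ ω, ω 0 ∂μ, ∫ ω, ω 1 ∂μ] ≠ 0)
    (l : ℝ)
    (heig : (!![∫ ω, ω 0 * ω 0 ∂μ, ∫ ω, ω 0 * ω 1 ∂μ;
                ∫ ω, ω 1 * ω 0 ∂μ, ∫ ω, ω 1 * ω 1 ∂μ]).mulVec
          ![∫ ω, ω 0 ∂μ, ∫ ω, ω 1 ∂μ] = l • ![∫ ω, ω 0 ∂μ, ∫ ω, ω 1 ∂μ]) :
    (∫ ω, ω 0 ∂μ) ^ 2 + (∫ ω, ω 1 ∂μ) ^ 2 ≤ l ∧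
      l ≤ Real.sqrt ((∫ ω, ω 0 ∂μ) ^ 2 + (∫ ω, ω 1 ∂μ) ^ 2) := by
  have : IsProbabilityMeasure μ := ⟨hmass⟩
  have h_quarter : ∀ᵐ ω ∂μ, ‖ω‖ = 1 ∧ 0 ≤ ω 0 ∧ 0 ≤ ω 1 := hsupp
  have h_norm : ∀ᵐ ω ∂μ, ‖planeProjection ω‖ ≤ 1 :=
    h_quarter.mono fun ω hω ↦ (norm_planeProjection_le ω).trans_eq hω.1
  have h_memLp : MemLp planeProjection 2 μ :=
    .of_bound continuous_planeProjection.aestronglyMeasurable 1 h_norm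
  have h_integrable : Integrable planeProjection μ := h_memLp.integrable one_le_two
  have h_inner : ∀ᵐ ω ∂μ, 0 ≤ inner ℝ (planeProjection ω) (∫ ω, planeProjection ω ∂μ) :=
    inner_integral_nonneg_of_nonneg h_integrable
      (h_quarter.mono fun ω hω ↦ Fin.forall_fin_two.mpr hω.2)
  have h_bounds := quarter_moment_eigenvalue_bounds_general (l := l) h_memLp.1 h_norm h_inner
  rw [integral_planeProjection h_integrable, secondMoment_planeProjection h_memLp, heig] at h_bounds
  simpa [EuclideanSpace.norm_eq, Real.sq_sqrt, add_nonneg, sq_nonneg]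
    using h_bounds (by simpa using hφ) rfl
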